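/- Let A ∈ ℝ^{3×3} be symmetric positive definite with three distinct eigenvalues λ₁ < λ₂ < λ₃ and corresponding unit eigenvectors u₁, u₂, u₃. If R ∈ SO(3) satisfies AR = Rᵀ A, then either R = I₃ or R = R(π, u_i) = -I₃ + 2 u_i u_iᵀ for some i ∈ {1,2,3}. -/

import Mathlib

open Matrix

/-- The hat map `[·]^×` sending `x ∈ ℝ³` to the skew-symmetric matrix with `[x]^× y = x × y`. -/
noncomputable def hat (x : Fin 3 → ℝ) : Matrix (Fin 3) (Fin 3) ℝ :=
  !![0, -x 2, x 1; x 2, 0, -x 0; -x 1, x 0, 0]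

/-- The inverse of the hat map (on skew-symmetric matrices). -/
noncomputable def vex (C : Matrix (Fin 3) (Fin 3) ℝ) : Fin 3 → ℝ :=
  ![C 2 1, C 0 2, C 1 0]

/-- The skew-symmetric projection `P_a(C) = (C - Cᵀ)/2`. -/
noncomputable def Pa (C : Matrix (Fin 3) (Fin 3) ℝ) : Matrix (Fin 3) (Fin 3) ℝ :=
  (1/2 : ℝ) • (C - Cᵀ)

/-- `ψ = vex ∘ P_a`. -/
noncomputable def psi (C : Matrix (Fin 3) (Fin 3) ℝ) : Fin 3 → ℝ :=
  vex (Pa C)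

/-- Membership in `SO(3)`. -/
def IsSO3 (R : Matrix (Fin 3) (Fin 3) ℝ) : Prop :=
  Rᵀ * R = 1 ∧ R.det = 1

/-- Angle-axis (Rodrigues) parameterization `R(θ,u)`. -/
noncomputable def rodrigues (θ : ℝ) (u : Fin 3 → ℝ) : Matrix (Fin 3) (Fin 3) ℝ :=
  1 + Real.sin θ • hat u + (1 - Real.cos θ) • (hat u * hat u)

/-- Critical-point characterization: if `A` is symmetric positive definite with
distinct eigenvalues `λ₁ < λ₂ < λ₃` and unit eigenvectors `u i`, and `R ∈ SO(3)`
satisfies `AR = RᵀA`, then `R = I₃` or `R = R(π, uᵢ) = -I₃ + 2 uᵢ uᵢᵀ` for some `i`. -/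
theorem critical_points_of_weighted_trace (A : Matrix (Fin 3) (Fin 3) ℝ)
    (hA : A.PosDef) (lam : Fin 3 → ℝ) (u : Fin 3 → (Fin 3 → ℝ))
    (heig : ∀ i, A *ᵥ u i = lam i • u i)
    (hunit : ∀ i, u i ⬝ᵥ u i = 1)
    (hlt : lam 0 < lam 1 ∧ lam 1 < lam 2)
    (R : Matrix (Fin 3) (Fin 3) ℝ) (hR : IsSO3 R)
    (hcrit : A * R = Rᵀ * A) :
    R = 1 ∨ ∃ i : Fin 3, R = -(1 : Matrix (Fin 3) (Fin 3) ℝ) + (2 : ℝ) • vecMulVec (u i) (u i) := by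
  obtain ⟨h01, h12⟩ := hlt
  have hsymm : Aᵀ = A := by
    have := hA.1
    rw [IsHermitian, conjTranspose_eq_transpose_of_trivial] at this
    exact this
  have hinj : ∀ i j, i ≠ j → lam i ≠ lam j := by
    intro i j hij
    fin_cases i <;> fin_cases j <;> simp at hij ⊢ <;> linarith
  have hpos : ∀ i, 0 < lam i := by
    intro i
    have hne : u i ≠ 0 := by
      intro h
      have := hunit i
      simp [h] at this
    have := hA.dotProduct_mulVec_pos hne
    rw [heig i] at this
    simpa [hunit i] using this
  have horth : ∀ i j, i ≠ j → u i ⬝ᵥ u j = 0 := by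
    intro i j hij
    have h1 : u i ⬝ᵥ (A *ᵥ u j) = (A *ᵥ u i) ⬝ᵥ u j := by
      rw [dotProduct_mulVec, ← mulVec_transpose, hsymm]
    rw [heig, heig, dotProduct_smul, smul_dotProduct, smul_eq_mul, smul_eq_mul] at h1
    have h2 : (lam i - lam j) * (u i ⬝ᵥ u j) = 0 := by linarith
    exact (mul_eq_zero.mp h2).resolve_left (sub_ne_zero.mpr (hinj i j hij))
  obtain ⟨hO, hdet⟩ := hR
  have hO' : R * Rᵀ = 1 := mul_eq_one_comm.mp hO
  let U : Matrix (Fin 3) (Fin 3) ℝ := Matrix.of u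
  have hU : U * Uᵀ = 1 := by
    ext i j
    change u i ⬝ᵥ u j = _
    by_cases hij : i = j
    · subst hij; simp [hunit]
    · simp [horth i j hij, hij]
  have hU' : Uᵀ * U = 1 := mul_eq_one_comm.mp hU
  let L : Matrix (Fin 3) (Fin 3) ℝ := diagonal lam
  have hAU : A * Uᵀ = Uᵀ * L := by
    ext i j
    have := congrFun (heig j) i
    rw [mul_diagonal]
    change (A *ᵥ u j) i = u j i * lam j
    rw [this]; simp [mul_comm]
  have hUA : U * A = L * U := by
    have := congrArg transpose hAU
    simpa [transpose_mul, hsymm, L] using this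
  obtain ⟨D, hD⟩ : ∃ D, D = U * R * Uᵀ := ⟨_, rfl⟩
  have hDT : Dᵀ = U * Rᵀ * Uᵀ := by rw [hD]; simp [transpose_mul, Matrix.mul_assoc]
  have hRD : R = Uᵀ * D * U := by
    rw [hD]
    calc R = (Uᵀ * U) * R * (Uᵀ * U) := by rw [hU']; simp
      _ = _ := by simp only [Matrix.mul_assoc]
  have hDD : D * Dᵀ = 1 := by
    calc D * Dᵀ = U * R * (Uᵀ * U) * Rᵀ * Uᵀ := by rw [hDT, hD]; simp only [Matrix.mul_assoc]
      _ = U * (R * Rᵀ) * Uᵀ := by rw [hU']; simp only [Matrix.mul_assoc, Matrix.one_mul]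
      _ = 1 := by rw [hO', Matrix.mul_one, hU]
  have hLD : L * D = Dᵀ * L := by
    calc L * D = (L * U) * R * Uᵀ := by rw [hD]; simp only [Matrix.mul_assoc]
      _ = U * (A * R) * Uᵀ := by rw [← hUA]; simp only [Matrix.mul_assoc]
      _ = U * Rᵀ * (A * Uᵀ) := by rw [hcrit]; simp only [Matrix.mul_assoc]
      _ = Dᵀ * L := by rw [hAU, hDT]; simp only [Matrix.mul_assoc]
  have hDL : D * L = L * Dᵀ := by
    calc D * L = D * L * (D * Dᵀ) := by rw [hDD, Matrix.mul_one]
      _ = D * (L * D) * Dᵀ := by simp only [Matrix.mul_assoc]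
      _ = (D * Dᵀ) * L * Dᵀ := by rw [hLD]; simp only [Matrix.mul_assoc]
      _ = L * Dᵀ := by rw [hDD, Matrix.one_mul]
  have hcomm : D * L * L = L * (L * D) := by
    rw [hDL, hLD, Matrix.mul_assoc]
  have hoff : ∀ i j, i ≠ j → D i j = 0 := by
    intro i j hij
    have h := congrFun (congrFun hcomm i) j
    simp only [L, mul_diagonal, diagonal_mul] at h
    have h2 : D i j * ((lam j - lam i) * (lam j + lam i)) = 0 := by linarith
    refine (mul_eq_zero.mp h2).resolve_right (mul_ne_zero ?_ ?_)
    · exact sub_ne_zero.mpr (hinj j i hij.symm)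
    · have := hpos i
      have := hpos j
      positivity
  have hdetD : D.det = 1 := by
    have h := congrArg det hU
    rw [det_mul, det_one] at h
    rw [hD, det_mul, det_mul, hdet, mul_one, h]
  obtain ⟨d, hd⟩ : ∃ d : Fin 3 → ℝ, D = diagonal d := by
    refine ⟨fun i => D i i, ?_⟩
    ext i j
    by_cases hij : i = j
    · subst hij; simp
    · simp [hoff i j hij, hij]
  have hsq : ∀ i, d i = 1 ∨ d i = -1 := by
    intro i
    have h := congrFun (congrFun hDD i) i
    rw [hd] at h
    simp at h
    exact mul_self_eq_one_iff.mp h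
  rw [hd, det_diagonal, Fin.prod_univ_three] at hdetD
  have hcase : ∀ i : Fin 3, d = (fun j => if j = i then 1 else -1) →
      R = -(1 : Matrix (Fin 3) (Fin 3) ℝ) + (2 : ℝ) • vecMulVec (u i) (u i) := by
    intro i hi
    have hDi : D = -1 + (2 : ℝ) • Matrix.single i i 1 := by
      rw [hd, hi]
      ext a b
      fin_cases i <;> fin_cases a <;> fin_cases b <;> simp [Matrix.single] <;> norm_num
    rw [hRD, hDi, Matrix.mul_add, Matrix.add_mul]
    congr 1
    · rw [Matrix.mul_neg, Matrix.neg_mul, Matrix.mul_one, hU']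
    · rw [Matrix.mul_smul, Matrix.smul_mul]
      congr 1
      ext a b
      fin_cases i <;> simp [Matrix.mul_apply, Fin.sum_univ_three, Matrix.single, U, vecMulVec_apply]
  rcases hsq 0 with h0 | h0 <;> rcases hsq 1 with h1 | h1 <;> rcases hsq 2 with h2 | h2 <;>
    rw [h0, h1, h2] at hdetD <;> norm_num at hdetD
  · left
    have : D = 1 := by
      rw [hd, ← diagonal_one]
      congr 1
      ext i
      fin_cases i <;> simp [h0, h1, h2]
    rw [hRD, this, Matrix.mul_one, hU']
  · exact Or.inr ⟨0, hcase 0 (by ext j; fin_cases j <;> simp [h0, h1, h2])⟩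
  · exact Or.inr ⟨1, hcase 1 (by ext j; fin_cases j <;> simp [h0, h1, h2])⟩
  · exact Or.inr ⟨2, hcase 2 (by ext j; fin_cases j <;> simp [h0, h1, h2])⟩
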